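/- Let ℘ be the Weierstrass ℘-function for the lattice ℤ + ℤi. Along the paths α₁(t) = i/3 + t and α₂(t) = 1/3 + it, t ∈ [0,1], one has ∫_{α₁} ℘(z) dz = −π and ∫_{α₂} ℘(z) dz = iπ. -/

import Mathlib

/-!
Write `A` and `B` for the integrals of `℘` over `t ↦ i/3 + t` and `t ↦ 1/3 + it`, with respect
to `dt`, `0 ≤ t ≤ 1`. Two relations determine them.

* *Symmetry.* The lattice is stable under multiplication by `i`, so `℘(iz) = -℘(z)`; together with
  evenness and periodicity this gives `B = -A` (`integral_vertical_eq_neg_horizontal`).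
* *Legendre relation.* Integrate `z℘(z)` around the square with opposite corners `-2/3 - 2i/3` and
  `1/3 + i/3`. Its top and right sides lie on the lines of the two paths, and by periodicity of `℘`
  opposite sides combine to `-iA` and `iB`. The only pole inside is at `0`, with residue `1`, so
  `iB - iA = 2πi` (`legendre_relation`). Working with `z℘(z)` makes the Weierstrass
  `ζ`-function unnecessary.

The residue is computed by splitting `℘(z) = 1/z² + wpReg z`: the function `z * wpReg z` is
holomorphic on the square, so Cauchy's theorem for rectangles applies to it, and the integral of
`1/z` over the boundary is evaluated with logarithms (`rect_integral_inv`). Periodicity, evenness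
and holomorphy come from Mathlib's `PeriodPair.weierstrassP`, with which `wp` agrees.
-/

open Real

/-- The Weierstrass `℘`-function for the unit square lattice `ℤ + ℤi`. -/
noncomputable def wp (z : ℂ) : ℂ :=
  1/z^2 + ∑' p : {q : ℤ × ℤ // q ≠ 0},
    (1/(z - (((p.1.1 : ℂ)) + (p.1.2 : ℂ) * Complex.I))^2
      - 1/(((p.1.1 : ℂ)) + (p.1.2 : ℂ) * Complex.I)^2)

/-- The period pair `(1, i)`, whose lattice is `ℤ + ℤi`. -/
noncomputable def sqPair : PeriodPair where
  ω₁ := 1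
  ω₂ := Complex.I
  indep := by
    rw [LinearIndependent.pair_iff]
    intro s t h
    have h1 := congrArg Complex.re h
    have h2 := congrArg Complex.im h
    simp at h1 h2
    exact ⟨h1, h2⟩

/-- `℘(z) - 1 / z²`, the lattice sum without its polar term at `0`; it is holomorphic near `0`. -/
noncomputable def wpReg (z : ℂ) : ℂ := sqPair.weierstrassPExcept 0 z

lemma wp_eq_reg (z : ℂ) : wp z = 1 / z ^ 2 + wpReg z := by
  rw [wp, wpReg, PeriodPair.weierstrassPExcept]
  congr 1
  rw [← sqPair.latticeEquivProd.symm.toEquiv.tsum_eq]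
  have hsupp : Function.support (fun q : ℤ × ℤ =>
      if ((sqPair.latticeEquivProd.symm q : sqPair.lattice) : ℂ) = 0 then (0 : ℂ) else
        1 / (z - (sqPair.latticeEquivProd.symm q : sqPair.lattice)) ^ 2
          - 1 / ((sqPair.latticeEquivProd.symm q : sqPair.lattice) : ℂ) ^ 2)
      ⊆ {q : ℤ × ℤ | q ≠ 0} := by
    rintro q hq rfl
    simp at hq
  refine Eq.trans ?_ (tsum_subtype_eq_of_support_subset hsupp)
  refine tsum_congr fun p => ?_
  have hp : ((sqPair.latticeEquivProd.symm p.1 : sqPair.lattice) : ℂ) ≠ 0 := by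
    have := p.2
    simpa using this
  refine Eq.trans ?_ (if_neg hp).symm
  have hc : ((sqPair.latticeEquivProd.symm.toEquiv p.1 : sqPair.lattice) : ℂ)
      = (p.1.1 : ℂ) + (p.1.2 : ℂ) * Complex.I :=
    (sqPair.latticeEquiv_symm_apply p.1).trans (by simp [sqPair])
  rw [hc]

lemma wp_eq_weierstrassP (z : ℂ) : wp z = sqPair.weierstrassP z := by
  have h := sqPair.weierstrassPExcept_add 0 z
  rw [wp_eq_reg, wpReg, ← h]
  simp [add_comm]

lemma wp_neg (z : ℂ) : wp (-z) = wp z := by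
  simp only [wp_eq_weierstrassP, PeriodPair.weierstrassP_neg]

lemma wp_add_one (z : ℂ) : wp (z + 1) = wp z := by
  simp only [wp_eq_weierstrassP]
  exact sqPair.weierstrassP_add_coe z ⟨1, sqPair.ω₁_mem_lattice⟩

lemma wp_add_I (z : ℂ) : wp (z + Complex.I) = wp z := by
  simp only [wp_eq_weierstrassP]
  exact sqPair.weierstrassP_add_coe z ⟨Complex.I, sqPair.ω₂_mem_lattice⟩

/-- The quarter-turn symmetry of the square lattice. -/
lemma wp_I_mul (z : ℂ) : wp (Complex.I * z) = -wp z := by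
  let e : {q : ℤ × ℤ // q ≠ 0} ≃ {q : ℤ × ℤ // q ≠ 0} :=
    { toFun := fun p => ⟨(-p.1.2, p.1.1), fun h => p.2 (by
        simp only [Prod.mk_eq_zero, neg_eq_zero] at h
        exact Prod.ext h.2 h.1)⟩
      invFun := fun p => ⟨(p.1.2, -p.1.1), fun h => p.2 (by
        simp only [Prod.mk_eq_zero, neg_eq_zero] at h
        exact Prod.ext h.2 h.1)⟩
      left_inv := fun p => by simp
      right_inv := fun p => by simp }
  have key : ∀ w : ℂ, 1 / (Complex.I * w) ^ 2 = -(1 / w ^ 2) := fun w => by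
    rw [mul_pow, Complex.I_sq, neg_one_mul, div_neg]
  rw [wp, wp, key, ← e.tsum_eq, neg_add, ← tsum_neg]
  congr 1
  refine tsum_congr fun p => ?_
  have h1 : (((e p).1.1 : ℂ)) + ((e p).1.2 : ℂ) * Complex.I
      = Complex.I * ((p.1.1 : ℂ) + (p.1.2 : ℂ) * Complex.I) := by
    simp only [e, Equiv.coe_fn_mk]
    push_cast
    linear_combination (-(p.1.2 : ℂ)) * Complex.I_sq
  rw [h1, ← mul_sub, key, key]
  ring

lemma mem_sqPair_lattice {z : ℂ} (hz : z ∈ sqPair.lattice) :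
    ∃ m n : ℤ, (m : ℝ) = z.re ∧ (n : ℝ) = z.im := by
  obtain ⟨m, n, rfl⟩ := PeriodPair.mem_lattice.1 hz
  exact ⟨m, n, by simp [sqPair], by simp [sqPair]⟩

lemma intCast_ne_third (m : ℤ) : (m : ℝ) ≠ 1 / 3 := by
  intro h
  have h3 : (3 * m : ℝ) = 1 := by rw [h]; norm_num
  norm_cast at h3
  omega

lemma continuous_wp_comp {γ : ℝ → ℂ} (hγ : Continuous γ)
    (h : ∀ t, (γ t).re = 1 / 3 ∨ (γ t).im = 1 / 3) : Continuous fun t => wp (γ t) := by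
  simp only [wp_eq_weierstrassP]
  refine sqPair.differentiableOn_weierstrassP.continuousOn.comp_continuous hγ fun t ht => ?_
  obtain ⟨m, n, hm, hn⟩ := mem_sqPair_lattice ht
  rcases h t with h | h
  · exact intCast_ne_third m (hm.trans h)
  · exact intCast_ne_third n (hn.trans h)

/-- `z ↦ z * wpReg z` is holomorphic on the closed square `[-2/3, 1/3] × [-2/3, 1/3]`,
whose only lattice point is `0`. -/
lemma differentiableOn_mul_wpReg :
    DifferentiableOn ℂ (fun z => z * wpReg z)
      (Set.uIcc (-2/3 : ℝ) (1/3) ×ℂ Set.uIcc (-2/3 : ℝ) (1/3)) := by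
  refine differentiableOn_id.mul ((sqPair.differentiableOn_weierstrassPExcept 0).mono ?_)
  rintro z ⟨hr, hi⟩ ⟨hl, h0⟩
  obtain ⟨m, n, hm, hn⟩ := mem_sqPair_lattice hl
  have key : ∀ k : ℤ, (k : ℝ) ∈ Set.uIcc (-2/3 : ℝ) (1/3) → k = 0 := fun k hk => by
    rw [Set.uIcc_of_le (by norm_num)] at hk
    have h1 : (-1 : ℝ) < k := by linarith [hk.1]
    have h2 : (k : ℝ) < 1 := by linarith [hk.2]
    norm_cast at h1 h2
    omega
  simp only [Set.mem_preimage, ← hm, ← hn] at hr hi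
  rw [key m hr] at hm
  rw [key n hi] at hn
  exact h0 (Complex.ext (by simpa using hm.symm) (by simpa using hn.symm))

/-- Integral of `1 / z` along a segment on which `s * z` avoids the branch cut of the logarithm,
for a constant `s` (used with `s = ±1`). -/
lemma integral_inv_segment (s p v : ℂ) (hs : s ≠ 0) (a b : ℝ)
    (h : ∀ t : ℝ, s * (p + t * v) ∈ Complex.slitPlane) :
    v * ∫ t in a..b, (p + t * v)⁻¹
      = Complex.log (s * (p + b * v)) - Complex.log (s * (p + a * v)) := by
  have hne : ∀ t : ℝ, p + t * v ≠ 0 := fun t h0 => by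
    have := h t
    rw [h0, mul_zero] at this
    exact Complex.slitPlane_ne_zero this rfl
  rw [← intervalIntegral.integral_const_mul]
  refine intervalIntegral.integral_eq_sub_of_hasDerivAt
    (f := fun t : ℝ => Complex.log (s * (p + t * v))) (fun t _ => ?_) ?_
  · have h1 : HasDerivAt (fun t : ℝ => s * (p + t * v)) (s * v) t := by
      have := ((((hasDerivAt_id t).ofReal_comp).mul_const v).const_add p).const_mul s
      simpa using this
    refine (h1.clog_real (h t)).congr_deriv ?_
    rw [mul_div_mul_left _ _ hs, div_eq_mul_inv]
  · refine Continuous.intervalIntegrable ?_ _ _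
    exact continuous_const.mul (Continuous.inv₀ (by fun_prop) hne)

lemma continuous_inv_segment (p v : ℂ) (h : ∀ t : ℝ, p + t * v ≠ 0) :
    Continuous fun t : ℝ => (p + t * v)⁻¹ :=
  Continuous.inv₀ (by fun_prop) h

/-- The four sides of the square `[-2/3, 1/3] × [-2/3, 1/3]` together contribute `2πi` to the
integral of `1 / z`. The principal logarithm is a primitive on the bottom, right and top sides and
`log (-z)` on the left side; the two branches differ by `πi` at the corners. -/
lemma rect_integral_inv :
    (∫ x in (-2/3 : ℝ)..(1/3), (-(2 * Complex.I / 3) + (x : ℂ) * 1)⁻¹)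
      - (∫ x in (-2/3 : ℝ)..(1/3), (Complex.I / 3 + (x : ℂ) * 1)⁻¹)
      + Complex.I * (∫ y in (-2/3 : ℝ)..(1/3), (1 / 3 + (y : ℂ) * Complex.I)⁻¹)
      - Complex.I * (∫ y in (-2/3 : ℝ)..(1/3), (-(2 / 3) + (y : ℂ) * Complex.I)⁻¹)
      = 2 * π * Complex.I := by
  have hB := integral_inv_segment 1 (-(2 * Complex.I / 3)) 1 one_ne_zero (-2/3) (1/3)
    (fun t => by right; simp)
  have hT := integral_inv_segment 1 (Complex.I / 3) 1 one_ne_zero (-2/3) (1/3)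
    (fun t => by right; simp)
  have hR := integral_inv_segment 1 (1 / 3) Complex.I one_ne_zero (-2/3) (1/3)
    (fun t => by left; simp)
  have hL := integral_inv_segment (-1) (-(2 / 3)) Complex.I (by simp) (-2/3) (1/3)
    (fun t => by left; simp)
  have hlog1 : Complex.log (-(-2/3 + Complex.I / 3))
      = Complex.log (-2/3 + Complex.I / 3) - π * Complex.I := by
    have h := Complex.arg_neg_eq_arg_sub_pi_of_im_pos (x := -2/3 + Complex.I / 3) (by simp)
    rw [Complex.log, Complex.log, h, norm_neg]
    push_cast
    ring
  have hlog2 : Complex.log (-(-2/3 - 2 * Complex.I / 3))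
      = Complex.log (-2/3 - 2 * Complex.I / 3) + π * Complex.I := by
    have h := Complex.arg_neg_eq_arg_add_pi_of_im_neg (x := -2/3 - 2 * Complex.I / 3) (by simp)
    rw [Complex.log, Complex.log, h, norm_neg]
    push_cast
    ring
  rw [one_mul] at hB hT
  rw [hB, hT, hR, hL]
  push_cast
  have e1 : (1 : ℂ) * (-(2 * Complex.I / 3) + 1 / 3 * 1) = 1 * (1 / 3 + -2 / 3 * Complex.I) := by
    ring
  have e2 : (1 : ℂ) * (-(2 * Complex.I / 3) + -2 / 3 * 1) = -2/3 - 2 * Complex.I / 3 := by ring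
  have e3 : (1 : ℂ) * (Complex.I / 3 + 1 / 3 * 1) = 1 * (1 / 3 + 1 / 3 * Complex.I) := by ring
  have e4 : (1 : ℂ) * (Complex.I / 3 + -2 / 3 * 1) = -2/3 + Complex.I / 3 := by ring
  have e5 : (-1 : ℂ) * (-(2 / 3) + 1 / 3 * Complex.I) = -(-2/3 + Complex.I / 3) := by ring
  have e6 : (-1 : ℂ) * (-(2 / 3) + -2 / 3 * Complex.I) = -(-2/3 - 2 * Complex.I / 3) := by ring
  rw [e1, e2, e3, e4, e5, e6, hlog1, hlog2]
  ring

/-- Opposite sides `p + tv` and `p - d + tv` of the square: by periodicity, the integrand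
`z * wpReg z = z * wp z - 1 / z` differs between them by `d * wp` minus a
difference of inverses. -/
lemma integral_side_sub (p q v d : ℂ) (hq : ∀ t : ℝ, q + t * v + d = p + t * v)
    (hd : ∀ z, wp (z + d) = wp z)
    (hp0 : ∀ t : ℝ, p + t * v ≠ 0) (hq0 : ∀ t : ℝ, q + t * v ≠ 0)
    (hc : Continuous fun t : ℝ => wp (p + t * v)) (a b : ℝ) :
    (∫ t in a..b, (p + t * v) * wpReg (p + t * v)) - (∫ t in a..b, (q + t * v) * wpReg (q + t * v))
      = d * (∫ t in a..b, wp (p + t * v))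
        - ((∫ t in a..b, (p + t * v)⁻¹) - ∫ t in a..b, (q + t * v)⁻¹) := by
  have hcp := continuous_inv_segment p v hp0
  have hcq := continuous_inv_segment q v hq0
  have hcm : ∀ r : ℂ, Continuous fun t : ℝ => (r + t * v) * wp (p + t * v) := fun r =>
    Continuous.mul (by fun_prop) hc
  have hwq : ∀ t : ℝ, wp (q + t * v) = wp (p + t * v) := fun t => by rw [← hq t, hd]
  have key : ∀ z : ℂ, z ≠ 0 → z * wpReg z = z * wp z - z⁻¹ := fun z hz => by
    rw [wp_eq_reg]
    field_simp
    ring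
  have hP : (∫ t in a..b, (p + t * v) * wpReg (p + t * v))
      = (∫ t in a..b, (p + t * v) * wp (p + t * v)) - ∫ t in a..b, (p + t * v)⁻¹ := by
    rw [← intervalIntegral.integral_sub
      ((hcm p).intervalIntegrable _ _) (hcp.intervalIntegrable _ _)]
    exact intervalIntegral.integral_congr fun t _ => key _ (hp0 t)
  have hQ : (∫ t in a..b, (q + t * v) * wpReg (q + t * v))
      = (∫ t in a..b, (q + t * v) * wp (p + t * v)) - ∫ t in a..b, (q + t * v)⁻¹ := by
    rw [← intervalIntegral.integral_sub
      ((hcm q).intervalIntegrable _ _) (hcq.intervalIntegrable _ _)]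
    refine intervalIntegral.integral_congr fun t _ => ?_
    simp only [key _ (hq0 t), hwq]
  have hD : (∫ t in a..b, (p + t * v) * wp (p + t * v))
      - (∫ t in a..b, (q + t * v) * wp (p + t * v)) = d * ∫ t in a..b, wp (p + t * v) := by
    rw [← intervalIntegral.integral_sub
      ((hcm p).intervalIntegrable _ _)
      ((hcm q).intervalIntegrable _ _),
      ← intervalIntegral.integral_const_mul]
    refine intervalIntegral.integral_congr fun t _ => ?_
    simp only [← hq t]
    ring
  rw [hP, hQ, ← hD]
  ring

lemma wp_horizontal_periodic :
    Function.Periodic (fun t : ℝ => wp (Complex.I / 3 + (t : ℂ) * 1)) 1 := fun t => by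
  simp only [Complex.ofReal_add, Complex.ofReal_one, mul_one]
  rw [← add_assoc, wp_add_one]

lemma wp_vertical_periodic :
    Function.Periodic (fun t : ℝ => wp (1 / 3 + (t : ℂ) * Complex.I)) 1 := fun t => by
  simp only [Complex.ofReal_add, Complex.ofReal_one, add_mul, one_mul]
  rw [← add_assoc, wp_add_I]

/-- The Legendre relation for the periods `1` and `i`, in terms of integrals of `℘` rather than
quasi-periods of `ζ`. -/
lemma legendre_relation :
    Complex.I * (∫ t in (0 : ℝ)..1, wp (1 / 3 + (t : ℂ) * Complex.I))
      - Complex.I * (∫ t in (0 : ℝ)..1, wp (Complex.I / 3 + (t : ℂ) * 1))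
      = 2 * π * Complex.I := by
  have hrect := Complex.integral_boundary_rect_eq_zero_of_differentiableOn
    (fun z => z * wpReg z) ⟨-2/3, -2/3⟩ ⟨1/3, 1/3⟩ differentiableOn_mul_wpReg
  have hH := integral_side_sub (Complex.I / 3) (-(2 * Complex.I / 3)) 1 Complex.I
    (fun t => by ring) wp_add_I
    (fun t h => by simpa using congrArg Complex.im h)
    (fun t h => by simpa using congrArg Complex.im h)
    (continuous_wp_comp (by fun_prop) fun t => by right; simp) (-2/3) (1/3)
  have hV := integral_side_sub (1 / 3) (-(2 / 3)) Complex.I 1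
    (fun t => by ring) wp_add_one
    (fun t h => by simpa using congrArg Complex.re h)
    (fun t h => by simpa using congrArg Complex.re h)
    (continuous_wp_comp (by fun_prop) fun t => by left; simp) (-2/3) (1/3)
  have pH := wp_horizontal_periodic.intervalIntegral_add_eq (-2/3) 0
  have pV := wp_vertical_periodic.intervalIntegral_add_eq (-2/3) 0
  rw [show (-2/3 : ℝ) + 1 = 1/3 by norm_num, zero_add] at pH pV
  rw [← pH, ← pV]
  have eB : ∀ x : ℝ, (x : ℂ) + ((-2/3 : ℝ) : ℂ) * Complex.I
      = -(2 * Complex.I / 3) + (x : ℂ) * 1 := fun x => by push_cast; ring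
  have eT : ∀ x : ℝ, (x : ℂ) + ((1/3 : ℝ) : ℂ) * Complex.I
      = Complex.I / 3 + (x : ℂ) * 1 := fun x => by push_cast; ring
  have eR : ((1/3 : ℝ) : ℂ) = 1 / 3 := by push_cast; ring
  have eL : ((-2/3 : ℝ) : ℂ) = -(2 / 3) := by push_cast; ring
  simp only [eB, eT, smul_eq_mul] at hrect
  rw [eR, eL] at hrect
  linear_combination hrect + hH - Complex.I * hV + rect_integral_inv

/-- Multiplication by `i` carries the horizontal path, reversed, to the vertical one. -/
lemma integral_vertical_eq_neg_horizontal :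
    (∫ t in (0 : ℝ)..1, wp (1 / 3 + (t : ℂ) * Complex.I))
      = -∫ t in (0 : ℝ)..1, wp (Complex.I / 3 + (t : ℂ) * 1) := by
  have h1 : ∀ t : ℝ, wp (1 / 3 + (t : ℂ) * Complex.I)
      = -wp (Complex.I / 3 + ((1 - t : ℝ) : ℂ) * 1) := fun t => by
    have e1 : 1 / 3 + (t : ℂ) * Complex.I = Complex.I * (-(Complex.I / 3 + (-t))) := by
      linear_combination (1 / 3) * Complex.I_sq
    have e2 : Complex.I / 3 + ((1 - t : ℝ) : ℂ) * 1 = (Complex.I / 3 + (-t)) + 1 := by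
      push_cast
      ring
    rw [e1, e2, wp_I_mul, wp_neg, wp_add_one]
  simp only [h1]
  rw [intervalIntegral.integral_neg,
    intervalIntegral.integral_comp_sub_left
      (fun t : ℝ => wp (Complex.I / 3 + (t : ℂ) * 1)) 1]
  simp

theorem stmt_18 :
    (∫ t in (0:ℝ)..1, wp (Complex.I/3 + (t : ℂ))) = -(π : ℂ) ∧
    (∫ t in (0:ℝ)..1, wp (1/3 + (t : ℂ) * Complex.I) * Complex.I)
      = Complex.I * (π : ℂ) := by
  have hL := legendre_relation
  have hS := integral_vertical_eq_neg_horizontal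
  have hH : (∫ t in (0 : ℝ)..1, wp (Complex.I / 3 + (t : ℂ) * 1)) = -(π : ℂ) := by
    rw [hS] at hL
    linear_combination (Complex.I / 2) * hL
      + ((∫ t in (0 : ℝ)..1, wp (Complex.I / 3 + (t : ℂ) * 1)) + π) * Complex.I_sq
  rw [hH] at hS
  refine ⟨by simpa using hH, ?_⟩
  rw [intervalIntegral.integral_mul_const, hS]
  ring
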